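/- Let C be the linear map on ℂ^64 defined by: C e_21 = e_42 and C e_42 = e_21; C e_a = (−e_a + 2 e_b + 2 e_c)/3 for every cyclic rotation (a,b,c) of the triple (9, 18, 36) and of the triple (27, 45, 54); and C e_s = e_s for all remaining s ∈ {0,…,63}. Then C is unitary and commutes with each of the FHP observables M = Z_0 + Z_1 + Z_2 + Z_3 + Z_4 + Z_5, P_x = Z_0 − Z_3 + (1/2)(Z_1 + Z_5 − Z_2 − Z_4), and P_y = (√3/2)(Z_1 + Z_2 − Z_4 − Z_5). -/

import Mathlib

open Matrix

/-- The Pauli-`Z` operator on qubit `i` of a 6-qubit register: the `64 × 64` diagonal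
matrix whose `(s,s)` entry is `(−1)^{n_i(s)}`, where `n_i(s)` is the `i`-th binary
digit of `s`. -/
def Zq (i : ℕ) : Matrix (Fin 64) (Fin 64) ℂ :=
  Matrix.diagonal fun s => (-1 : ℂ) ^ (s.val / 2 ^ i % 2)

/-- The FHP mass observable `M = Z₀ + Z₁ + Z₂ + Z₃ + Z₄ + Z₅`. -/
def massM : Matrix (Fin 64) (Fin 64) ℂ := Zq 0 + Zq 1 + Zq 2 + Zq 3 + Zq 4 + Zq 5

/-- The FHP `x`-momentum observable `P_x = Z₀ − Z₃ + (1/2)(Z₁ + Z₅ − Z₂ − Z₄)`. -/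
noncomputable def momPx : Matrix (Fin 64) (Fin 64) ℂ :=
  Zq 0 - Zq 3 + (1 / 2 : ℂ) • (Zq 1 + Zq 5 - Zq 2 - Zq 4)

/-- The FHP `y`-momentum observable `P_y = (√3/2)(Z₁ + Z₂ − Z₄ − Z₅)`. -/
noncomputable def momPy : Matrix (Fin 64) (Fin 64) ℂ :=
  ((Real.sqrt 3 / 2 : ℝ) : ℂ) • (Zq 1 + Zq 2 - Zq 4 - Zq 5)

/-- The FHP 3-body collision operator: the `64 × 64` permutation matrix with
`C₃ e₂₁ = e₄₂`, `C₃ e₄₂ = e₂₁` and `C₃ e_s = e_s` for `s ∉ {21, 42}`. -/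
def collC3 : Matrix (Fin 64) (Fin 64) ℂ :=
  Matrix.of fun i j => if i = Equiv.swap (21 : Fin 64) 42 j then 1 else 0

/-- The column of the unitary mixing `e_a ↦ (−e_a + 2 e_b + 2 e_c)/3`. -/
noncomputable def mixCol (i a b c : Fin 64) : ℂ :=
  (1 / 3 : ℂ) * (-(if i = a then 1 else 0) + 2 * (if i = b then 1 else 0)
    + 2 * (if i = c then 1 else 0))

/-- The unitary FHP 0-momentum collision operator `C`: it exchanges `e₂₁ ↔ e₄₂`
(3-body collision), sends `e_a` to `(−e_a + 2 e_b + 2 e_c)/3` for every cyclic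
rotation `(a,b,c)` of `(9,18,36)` and of `(27,45,54)` (unitary realization of the
non-deterministic 2- and 4-body collisions), and fixes all other basis states. -/
noncomputable def collFHP : Matrix (Fin 64) (Fin 64) ℂ :=
  Matrix.of fun i j =>
    if j = 21 then (if i = 42 then 1 else 0)
    else if j = 42 then (if i = 21 then 1 else 0)
    else if j = 9 then mixCol i 9 18 36
    else if j = 18 then mixCol i 18 36 9
    else if j = 36 then mixCol i 36 9 18
    else if j = 27 then mixCol i 27 45 54
    else if j = 45 then mixCol i 45 54 27
    else if j = 54 then mixCol i 54 27 45
    else (if i = j then 1 else 0)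


lemma col_cases (P : Fin 64 → Prop) (h21 : P 21) (h42 : P 42) (h9 : P 9) (h18 : P 18)
    (h36 : P 36) (h27 : P 27) (h45 : P 45) (h54 : P 54)
    (h : ∀ j, (j ≠ 21 ∧ j ≠ 42 ∧ j ≠ 9 ∧ j ≠ 18 ∧ j ≠ 36 ∧ j ≠ 27 ∧ j ≠ 45 ∧ j ≠ 54) → P j)
    (j : Fin 64) : P j := by
  by_cases hj : (j ≠ 21 ∧ j ≠ 42 ∧ j ≠ 9 ∧ j ≠ 18 ∧ j ≠ 36 ∧ j ≠ 27 ∧ j ≠ 45 ∧ j ≠ 54)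
  · exact h j hj
  · have : j = 21 ∨ j = 42 ∨ j = 9 ∨ j = 18 ∨ j = 36 ∨ j = 27 ∨ j = 45 ∨ j = 54 := by tauto
    rcases this with rfl | rfl | rfl | rfl | rfl | rfl | rfl | rfl <;> assumption

lemma col21 (i : Fin 64) : collFHP i 21 = if i = 42 then 1 else 0 := by simp [collFHP]
lemma col42 (i : Fin 64) : collFHP i 42 = if i = 21 then 1 else 0 := by simp [collFHP]
lemma col9 (i : Fin 64) : collFHP i 9 = mixCol i 9 18 36 := by simp [collFHP]
lemma col18 (i : Fin 64) : collFHP i 18 = mixCol i 18 36 9 := by simp [collFHP]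
lemma col36 (i : Fin 64) : collFHP i 36 = mixCol i 36 9 18 := by simp [collFHP]
lemma col27 (i : Fin 64) : collFHP i 27 = mixCol i 27 45 54 := by simp [collFHP]
lemma col45 (i : Fin 64) : collFHP i 45 = mixCol i 45 54 27 := by simp [collFHP]
lemma col54 (i : Fin 64) : collFHP i 54 = mixCol i 54 27 45 := by simp [collFHP]
lemma colOther (i j : Fin 64)
    (h : j ≠ 21 ∧ j ≠ 42 ∧ j ≠ 9 ∧ j ≠ 18 ∧ j ≠ 36 ∧ j ≠ 27 ∧ j ≠ 45 ∧ j ≠ 54) :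
    collFHP i j = if i = j then 1 else 0 := by
  obtain ⟨h1, h2, h3, h4, h5, h6, h7, h8⟩ := h
  simp [collFHP, h1, h2, h3, h4, h5, h6, h7, h8]

lemma sum_mixCol (f : Fin 64 → ℂ) (a b c : Fin 64) :
    ∑ k, f k * mixCol k a b c = (1 / 3) * (-f a + 2 * f b + 2 * f c) := by
  have h : ∀ k, f k * mixCol k a b c = (1 / 3) * (-(if k = a then f k else 0)
      + 2 * (if k = b then f k else 0) + 2 * (if k = c then f k else 0)) := by
    intro k
    unfold mixCol
    split_ifs <;> ring
  simp only [h, ← Finset.mul_sum, Finset.sum_add_distrib, Finset.sum_neg_distrib]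
  simp

lemma collFHP_sq : collFHP * collFHP = 1 := by
  ext i j
  rw [Matrix.mul_apply, Matrix.one_apply]
  revert j
  apply col_cases
  · simp [col21, col42]
  · simp [col21, col42]
  · simp only [col9, sum_mixCol, col18, col36]; unfold mixCol; split_ifs <;> ring
  · simp only [col9, sum_mixCol, col18, col36]; unfold mixCol; split_ifs <;> ring
  · simp only [col9, sum_mixCol, col18, col36]; unfold mixCol; split_ifs <;> ring
  · simp only [col27, sum_mixCol, col45, col54]; unfold mixCol; split_ifs <;> ring
  · simp only [col27, sum_mixCol, col45, col54]; unfold mixCol; split_ifs <;> ring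
  · simp only [col27, sum_mixCol, col45, col54]; unfold mixCol; split_ifs <;> ring
  · intro j hj
    simp [colOther _ j hj]

lemma collFHP_symm : ∀ i j, collFHP i j = collFHP j i := by
  intro i
  apply col_cases <;> revert i <;> apply col_cases <;>
    first
    | (simp [col21, col42, col9, col18, col36, col27, col45, col54, mixCol]; done)
    | skip
  all_goals
    intro i hi
    try
      obtain ⟨h1, h2, h3, h4, h5, h6, h7, h8⟩ := id hi
      simp [col21, col42, col9, col18, col36, col27, col45, col54, mixCol, colOther _ _ hi,
        h1, h2, h3, h4, h5, h6, h7, h8, h1.symm, h2.symm, h3.symm, h4.symm, h5.symm, h6.symm,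
        h7.symm, h8.symm]
      done
  intro j hj
  rw [colOther _ i hi, colOther _ j hj]
  simp only [eq_comm]

lemma collFHP_real (i j : Fin 64) : star (collFHP i j) = collFHP i j := by
  revert j
  apply col_cases
  case h => intro j hj; rw [colOther _ j hj]; split_ifs <;> simp
  all_goals
    simp only [col21, col42, col9, col18, col36, col27, col45, col54, mixCol]
    split_ifs <;> simp

lemma comm_diag (d : Fin 64 → ℂ) (h1 : d 21 = d 42) (h2 : d 9 = d 18) (h3 : d 18 = d 36)
    (h4 : d 27 = d 45) (h5 : d 45 = d 54) :
    collFHP * Matrix.diagonal d = Matrix.diagonal d * collFHP := by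
  ext i j
  rw [Matrix.mul_diagonal, Matrix.diagonal_mul]
  revert j
  apply col_cases
  case h =>
    intro j hj
    rw [colOther _ j hj]
    split_ifs with h
    · rw [h]; ring
    · ring
  all_goals
    simp only [col21, col42, col9, col18, col36, col27, col45, col54, mixCol]
    split_ifs <;> simp_all [mul_comm]

/-- **The FHP 0-momentum collision operator is unitary and conserves mass and
momentum:** `C` is unitary and commutes with `M`, `P_x` and `P_y`. -/
theorem collFHP_unitary_conserves_mass_momentum :
    collFHP ∈ Matrix.unitaryGroup (Fin 64) ℂ ∧
    collFHP * massM = massM * collFHP ∧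
    collFHP * momPx = momPx * collFHP ∧
    collFHP * momPy = momPy * collFHP := by
  refine ⟨?_, ?_, ?_, ?_⟩
  · have hs : star collFHP = collFHP := by
      ext i j
      rw [Matrix.star_apply, collFHP_real, collFHP_symm]
    rw [Matrix.mem_unitaryGroup_iff, hs, collFHP_sq]
  · simp only [massM, Zq, Matrix.diagonal_add]
    apply comm_diag <;> norm_num
  · simp only [momPx, Zq, Matrix.diagonal_add, Matrix.diagonal_sub, ← Matrix.diagonal_smul]
    apply comm_diag <;> norm_num
  · simp only [momPy, Zq, Matrix.diagonal_add, Matrix.diagonal_sub, ← Matrix.diagonal_smul]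
    apply comm_diag <;> norm_num
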